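/- arXiv:2406.18325 — 2 statements merged into one kernel-verified Lean document; each statement's English description precedes it below -/
import Mathlib

section
/- Let c₁, c₂ ∈ 𝔽_p and let N(c₁,c₂) = #{(a,b) ∈ 𝔽_q × 𝔽_q : Tr(a²) = c₁ and Tr(b²) = c₂}. If m is even, then (as complex numbers) N(c₁,c₂) = (p^{m−1} + p^{−1}(p−1)G)² if c₁ = 0 and c₂ = 0; N(c₁,c₂) = p^{2m−2} + p^{m−2}(p−2)G − p^{−2}(p−1)G² if exactly one of c₁, c₂ is nonzero; and N(c₁,c₂) = (p^{m−1} − p^{−1}G)² if c₁ ≠ 0 and c₂ ≠ 0. -/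
open Finset
open scoped Classical

noncomputable section

/-- `ζ_p = exp(2πi/p)`. -/
def zeta (p : ℕ) : ℂ := Complex.exp (2 * Real.pi * Complex.I / p)

/-- The canonical additive character of `ℤ/p`: `χ̄₁(c) = ζ_p^c`. -/
def chiBar (p : ℕ) (c : ZMod p) : ℂ := zeta p ^ c.val

/-- The quadratic character of `(ℤ/p)^*`, extended by `η̄(0) = 0`. -/
def etaBar (p : ℕ) (c : ZMod p) : ℂ :=
  if c = 0 then 0 else if IsSquare c then 1 else -1

/-- The quadratic character of `F^*`, extended by `η(0) = 0`. -/
def etaQ (F : Type) [Field F] (x : F) : ℂ :=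
  if x = 0 then 0 else if IsSquare x then 1 else -1

/-- The absolute trace map from `F` to `ℤ/p`. -/
def Trq (p : ℕ) (F : Type) [Field F] [Algebra (ZMod p) F] (x : F) : ZMod p :=
  Algebra.trace (ZMod p) F x

/-- The canonical additive character of `F`: `χ₁(x) = ζ_p^{Tr x}`. -/
def chiQ (p : ℕ) (F : Type) [Field F] [Algebra (ZMod p) F] (x : F) : ℂ :=
  chiBar p (Trq p F x)

/-- The quadratic Gauss sum `G` over `F`. -/
def GaussQ (p : ℕ) (F : Type) [Field F] [Fintype F] [Algebra (ZMod p) F] : ℂ :=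
  ∑ x ∈ univ.filter (fun x : F => x ≠ 0), etaQ F x * chiQ p F x

/-- The quadratic Gauss sum `Ḡ` over `ℤ/p`. -/
def GaussP (p : ℕ) [NeZero p] : ℂ :=
  ∑ y ∈ univ.filter (fun y : ZMod p => y ≠ 0), etaBar p y * chiBar p y

/-!
Let `F / K` be finite fields, `q = #K`, and `ψ` a nontrivial additive character of `K`.
By orthogonality of the characters `x ↦ ψ (y x)` of `K`,
`q · #{a : Tr a² = c} = ∑ y, ψ (-y c) ∑ a, ψ (y · Tr a²)`. The term `y = 0` contributes `#F`. For
`y ≠ 0` the inner sum is the quadratic Gauss sum of the shifted character `x ↦ ψ (Tr (y x))`. Since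
`[F : K]` is even, `y` is a square in `F`, so `η(y) = 1` and this Gauss sum is `G`, independently of
`y`. Finally `∑_{y ≠ 0} ψ (-y c)` is `q - 1` if `c = 0` and `-1` otherwise, and the conditions on
`a` and `b` are independent.
-/

section QuadraticGaussSum

variable {F R : Type*} [Field F] [Fintype F] [DecidableEq F] [CommRing R]

/-- The quadratic Gauss sum `∑ a, η(a) ψ(a)` of an additive character `ψ` of a finite field, with
the integer-valued quadratic character `η` transported to the target ring of `ψ`. -/
def quadraticGaussSum (ψ : AddChar F R) : R :=
  gaussSum ((quadraticChar F).ringHomComp (Int.castRingHom R)) ψ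

lemma quadraticGaussSum_mulShift_of_isSquare (ψ : AddChar F R) {x : F} (hx : x ≠ 0)
    (hsq : IsSquare x) : quadraticGaussSum (ψ.mulShift x) = quadraticGaussSum ψ := by
  have h := gaussSum_mulShift ((quadraticChar F).ringHomComp (Int.castRingHom R)) ψ (Units.mk0 x hx)
  rwa [MulChar.ringHomComp_apply, Units.val_mk0, (quadraticChar_one_iff_isSquare hx).2 hsq, map_one,
    one_mul] at h

lemma sum_addChar_sq_eq_quadraticGaussSum [IsDomain R] (hF : ringChar F ≠ 2) {ψ : AddChar F R}
    (hψ : ψ ≠ 1) : ∑ a : F, ψ (a ^ 2) = quadraticGaussSum ψ := by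
  have card_sqrts (x : F) : (#{a : F | a ^ 2 = x} : R) = (quadraticChar F x : R) + 1 := by
    have h := quadraticChar_card_sqrts hF x
    rw [Set.toFinset_ofPred] at h
    exact_mod_cast congrArg (Int.cast : ℤ → R) h
  calc ∑ a : F, ψ (a ^ 2)
      = ∑ x : F, ∑ a : F with a ^ 2 = x, ψ x := (sum_fiberwise' univ (· ^ 2) ψ).symm
    _ = ∑ x : F, ((quadraticChar F x : R) * ψ x + ψ x) := by
        simp only [sum_const, nsmul_eq_mul, card_sqrts, add_one_mul]
    _ = quadraticGaussSum ψ := by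
        rw [sum_add_distrib, AddChar.sum_eq_zero_of_ne_one hψ, add_zero]
        rfl

end QuadraticGaussSum

section Fiber

variable {A K R : Type*} [Fintype A] [CommRing K] [Fintype K] [DecidableEq K] [CommRing R]
  [IsDomain R] {ψ : AddChar K R}

lemma sum_erase_zero_addChar_mul (hψ : ψ.IsPrimitive) (b : K) :
    ∑ y ∈ univ.erase 0, ψ (y * b) = if b = 0 then (Fintype.card K : R) - 1 else -1 := by
  rw [sum_erase_eq_sub (mem_univ 0), AddChar.sum_mulShift b hψ, zero_mul, AddChar.map_zero_eq_one]
  split_ifs <;> simp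

lemma card_mul_card_fiber_eq_sum (hψ : ψ.IsPrimitive) (f : A → K) (c : K) :
    (Fintype.card K : R) * #{a | f a = c} = ∑ y : K, ψ (y * -c) * ∑ a, ψ (y * f a) := by
  calc (Fintype.card K : R) * #{a | f a = c}
      = ∑ a, ∑ y : K, ψ (y * (f a - c)) := by
        simp only [AddChar.sum_mulShift _ hψ, sub_eq_zero, Nat.cast_ite, Nat.cast_zero,
          ← sum_filter, sum_const, nsmul_eq_mul, mul_comm]
    _ = ∑ y : K, ψ (y * -c) * ∑ a, ψ (y * f a) := by
        rw [sum_comm]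
        simp only [mul_sum, ← AddChar.map_add_eq_mul, ← mul_add, neg_add_eq_sub]

lemma card_mul_card_fiber_of_sum_eq (hψ : ψ.IsPrimitive) {f : A → K} {S : R}
    (hS : ∀ y ≠ 0, ∑ a, ψ (y * f a) = S) (c : K) :
    (Fintype.card K : R) * #{a | f a = c} =
      Fintype.card A + (if c = 0 then (Fintype.card K : R) - 1 else -1) * S := by
  have hsum : ∑ y ∈ univ.erase 0, ψ (y * -c) * ∑ a, ψ (y * f a) =
      (∑ y ∈ univ.erase 0, ψ (y * -c)) * S := by
    rw [sum_mul]
    exact sum_congr rfl fun y hy ↦ by rw [hS y (ne_of_mem_erase hy)]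
  rw [card_mul_card_fiber_eq_sum hψ, ← add_sum_erase _ _ (mem_univ 0), hsum,
    sum_erase_zero_addChar_mul hψ]
  simp

end Fiber

lemma card_cast_ne_zero_of_addChar_ne_one {K R : Type*} [Field K] [Fintype K] [CommRing R]
    [IsDomain R] {ψ : AddChar K R} (hψ : ψ ≠ 1) : (Fintype.card K : R) ≠ 0 := by
  -- If `R` had the characteristic of `K`, the only `#K`-th root of unity in `R` would be `1`.
  intro hcard
  obtain ⟨n, hp, hn⟩ := FiniteField.card K (ringChar K)
  have : Fact (ringChar K).Prime := ⟨hp⟩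
  have : CharP R (ringChar K) := by
    refine (CharP.charP_iff_prime_eq_zero hp).2 ?_
    rw [hn, Nat.cast_pow] at hcard
    exact eq_zero_of_pow_eq_zero hcard
  refine hψ (DFunLike.ext _ _ fun x ↦ ?_)
  have hpow : ψ x ^ (ringChar K ^ (n : ℕ) * 1) = 1 := by
    rw [mul_one, ← hn, ← AddChar.map_nsmul_eq_pow, card_nsmul_eq_zero, AddChar.map_zero_eq_one]
  simpa using (ExpChar.pow_prime_pow_mul_eq_one_iff (ringChar K) n 1 (ψ x)).1 hpow

section FiniteExtension

variable {K F : Type*} [Field K] [Field F] [Algebra K F]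

lemma exists_pow_eq_algebraMap_of_prime_dvd_finrank [Finite F] {l : ℕ} (hl : l.Prime)
    (hdvd : l ∣ Module.finrank K F) (y : K) : ∃ z : F, z ^ l = algebraMap K F y := by
  by_cases hy : ∃ x : K, x ^ l = y
  · obtain ⟨x, rfl⟩ := hy
    exact ⟨algebraMap K F x, (map_pow _ _ _).symm⟩
  -- Otherwise `X ^ l - y` is irreducible, and `F` contains a copy of its root field.
  · have hirr : Irreducible (Polynomial.X ^ l - Polynomial.C y) :=
      X_pow_sub_C_irreducible_of_prime hl (not_exists.1 hy)
    have : Fact (Irreducible (Polynomial.X ^ l - Polynomial.C y)) := ⟨hirr⟩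
    have hdeg : Module.finrank K (AdjoinRoot (Polynomial.X ^ l - Polynomial.C y)) = l := by
      rw [(AdjoinRoot.powerBasis hirr.ne_zero).finrank, AdjoinRoot.powerBasis_dim,
        Polynomial.natDegree_X_pow_sub_C]
    obtain ⟨φ⟩ := FiniteField.nonempty_algHom_of_finrank_dvd (hdeg.symm ▸ hdvd)
    refine ⟨φ (AdjoinRoot.root _), ?_⟩
    rw [← map_pow, root_X_pow_sub_C_pow]
    exact φ.commutes y

variable (F) {R : Type*} [CommRing R]

/-- The additive character `ψ ∘ Tr` of `F` obtained from an additive character `ψ` of `K`. -/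
def traceChar (ψ : AddChar K R) : AddChar F R :=
  ψ.compAddMonoidHom (Algebra.trace K F).toAddMonoidHom

lemma traceChar_apply (ψ : AddChar K R) (x : F) : traceChar F ψ x = ψ (Algebra.trace K F x) := rfl

lemma traceChar_ne_one [Finite F] {ψ : AddChar K R} (hψ : ψ ≠ 1) : traceChar F ψ ≠ 1 := by
  obtain ⟨c, hc⟩ := AddChar.ne_one_iff.1 hψ
  obtain ⟨x, rfl⟩ := Algebra.trace_surjective K F c
  exact AddChar.ne_one_iff.2 ⟨x, hc⟩

variable {F} [Fintype F] [DecidableEq F] [IsDomain R]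

lemma sum_addChar_mul_trace_sq (hF : ringChar F ≠ 2) (heven : Even (Module.finrank K F))
    {ψ : AddChar K R} (hψ : ψ ≠ 1) {y : K} (hy : y ≠ 0) :
    ∑ a : F, ψ (y * Algebra.trace K F (a ^ 2)) = quadraticGaussSum (traceChar F ψ) := by
  have hy' : algebraMap K F y ≠ 0 := (map_ne_zero _).2 hy
  obtain ⟨z, hz⟩ := exists_pow_eq_algebraMap_of_prime_dvd_finrank (F := F) Nat.prime_two
    heven.two_dvd y
  have hshift : (traceChar F ψ).mulShift (algebraMap K F y) ≠ 1 :=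
    AddChar.IsPrimitive.of_ne_one (traceChar_ne_one F hψ) hy'
  rw [← quadraticGaussSum_mulShift_of_isSquare _ hy' ⟨z, by rw [← hz, sq]⟩,
    ← sum_addChar_sq_eq_quadraticGaussSum hF hshift]
  simp only [AddChar.mulShift_apply, traceChar_apply, ← Algebra.smul_def, map_smul, smul_eq_mul]

lemma card_mul_card_trace_sq_eq [Fintype K] [DecidableEq K] (hF : ringChar F ≠ 2)
    (heven : Even (Module.finrank K F)) {ψ : AddChar K R} (hψ : ψ ≠ 1) (c : K) :
    (Fintype.card K : R) * #{a : F | Algebra.trace K F (a ^ 2) = c} =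
      (Fintype.card K : R) ^ Module.finrank K F +
        (if c = 0 then (Fintype.card K : R) - 1 else -1) * quadraticGaussSum (traceChar F ψ) := by
  rw [card_mul_card_fiber_of_sum_eq (AddChar.IsPrimitive.of_ne_one hψ)
    fun y hy ↦ sum_addChar_mul_trace_sq hF heven hψ hy,
    Module.card_eq_pow_finrank (K := K) (V := F), Nat.cast_pow]

end FiniteExtension

theorem N2_card_m_even_general {K F R : Type*} [Field K] [Fintype K] [DecidableEq K] [Field F]
    [Fintype F] [DecidableEq F] [Algebra K F] [Field R] (hF : ringChar F ≠ 2)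
    (heven : Even (Module.finrank K F)) {ψ : AddChar K R} (hψ : ψ ≠ 1) (c₁ c₂ : K) :
    let q : R := Fintype.card K
    let m : ℤ := Module.finrank K F
    let G : R := quadraticGaussSum (traceChar F ψ)
    let N : R :=
      #{ab : F × F | Algebra.trace K F (ab.1 ^ 2) = c₁ ∧ Algebra.trace K F (ab.2 ^ 2) = c₂}
    (c₁ = 0 ∧ c₂ = 0 → N = (q ^ (m - 1) + q⁻¹ * (q - 1) * G) ^ 2) ∧
    ((c₁ ≠ 0 ∧ c₂ = 0) ∨ (c₁ = 0 ∧ c₂ ≠ 0) →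
      N = q ^ (2 * m - 2) + q ^ (m - 2) * (q - 2) * G - q ^ (-2 : ℤ) * (q - 1) * G ^ 2) ∧
    (c₁ ≠ 0 ∧ c₂ ≠ 0 → N = (q ^ (m - 1) - q⁻¹ * G) ^ 2) := by
  intro q m G N
  have hq : q ≠ 0 := card_cast_ne_zero_of_addChar_ne_one hψ
  have card_fiber (c : K) : (#{a : F | Algebra.trace K F (a ^ 2) = c} : R) =
      q⁻¹ * (q ^ m + (if c = 0 then q - 1 else -1) * G) := by
    rw [eq_inv_mul_iff_mul_eq₀ hq, card_mul_card_trace_sq_eq hF heven hψ, zpow_natCast]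
  have hN : N = (q⁻¹ * (q ^ m + (if c₁ = 0 then q - 1 else -1) * G)) *
      (q⁻¹ * (q ^ m + (if c₂ = 0 then q - 1 else -1) * G)) := by
    rw [← card_fiber, ← card_fiber, ← Nat.cast_mul, ← card_product, ← filter_product,
      univ_product_univ]
  have hpow₁ : q ^ (m - 1) = q⁻¹ * q ^ m := by rw [zpow_sub_one₀ hq, mul_comm]
  have hpow₂ : q ^ (m - 2) = q⁻¹ ^ 2 * q ^ m := by
    rw [zpow_sub₀ hq, zpow_ofNat, inv_pow, div_eq_inv_mul]
  have hpow₃ : q ^ (2 * m - 2) = (q⁻¹ * q ^ m) ^ 2 := by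
    rw [← hpow₁, ← zpow_natCast, ← zpow_mul]; congr 1; push_cast; ring
  have hpow₄ : q ^ (-2 : ℤ) = q⁻¹ ^ 2 := by rw [zpow_neg, zpow_ofNat, inv_pow]
  rw [hN, hpow₁, hpow₂, hpow₃, hpow₄]
  refine ⟨?_, ?_, ?_⟩
  · rintro ⟨h₁, h₂⟩
    rw [if_pos h₁, if_pos h₂]
    ring
  · rintro (⟨h₁, h₂⟩ | ⟨h₁, h₂⟩) <;> simp only [h₁, h₂, if_true, if_false] <;> ring
  · rintro ⟨h₁, h₂⟩
    rw [if_neg h₁, if_neg h₂]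
    ring

section PrimeField

variable {p : ℕ}

lemma chiBar_eq_stdAddChar [NeZero p] (c : ZMod p) : chiBar p c = ZMod.stdAddChar c := by
  rw [ZMod.stdAddChar_apply, ZMod.toCircle_apply, chiBar, zeta, ← Complex.exp_nat_mul]
  congr 1
  ring

lemma stdAddChar_ne_one [Fact p.Prime] : (ZMod.stdAddChar : AddChar (ZMod p) ℂ) ≠ 1 := by
  simpa using ZMod.isPrimitive_stdAddChar p one_ne_zero

lemma etaQ_eq_quadraticChar {F : Type} [Field F] [Fintype F] (x : F) :
    etaQ F x = (quadraticChar F x : ℂ) := by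
  rw [etaQ, quadraticChar_apply, quadraticCharFun]
  split_ifs <;> simp

variable [Fact p.Prime] {F : Type} [Field F] [Algebra (ZMod p) F]

lemma ringChar_ne_two_of_odd (hp : Odd p) : ringChar F ≠ 2 := by
  rw [← Algebra.ringChar_eq (ZMod p) F, ZMod.ringChar_zmod_n]
  rintro rfl
  exact absurd hp (by decide)

variable [Fintype F]

lemma GaussQ_eq_quadraticGaussSum :
    GaussQ p F = quadraticGaussSum (traceChar F (ZMod.stdAddChar : AddChar (ZMod p) ℂ)) := by
  simp only [GaussQ, chiQ, Trq, chiBar_eq_stdAddChar, etaQ_eq_quadraticChar]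
  refine sum_subset (filter_subset _ _) fun x _ hx ↦ ?_
  rw [show x = 0 by simpa using hx, quadraticChar_zero, Int.cast_zero, zero_mul]

lemma finrank_eq_of_card_eq_pow {m : ℕ} (hq : Fintype.card F = p ^ m) :
    Module.finrank (ZMod p) F = m := by
  rw [Module.card_eq_pow_finrank (K := ZMod p), ZMod.card] at hq
  exact Nat.pow_right_injective (Fact.out : p.Prime).two_le hq

end PrimeField

theorem N2_card_m_even (p m : ℕ) [Fact (Nat.Prime p)] (hp : Odd p)
    (F : Type) [Field F] [Fintype F] [Algebra (ZMod p) F]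
    (hm : 0 < m) (hq : Fintype.card F = p ^ m)
    (hmeven : Even m) (c₁ c₂ : ZMod p) :
    (c₁ = 0 ∧ c₂ = 0 →
      (((univ.filter (fun ab : F × F =>
      Trq p F (ab.1 ^ 2) = c₁ ∧ Trq p F (ab.2 ^ 2) = c₂)).card : ℕ) : ℂ) = ((p : ℂ) ^ ((m : ℤ) - 1 : ℤ) + (p : ℂ)⁻¹ * ((p : ℂ) - 1) * GaussQ p F) ^ 2) ∧
    ((c₁ ≠ 0 ∧ c₂ = 0) ∨ (c₁ = 0 ∧ c₂ ≠ 0) →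
      (((univ.filter (fun ab : F × F =>
      Trq p F (ab.1 ^ 2) = c₁ ∧ Trq p F (ab.2 ^ 2) = c₂)).card : ℕ) : ℂ) = (p : ℂ) ^ (2 * (m : ℤ) - 2 : ℤ) + (p : ℂ) ^ ((m : ℤ) - 2 : ℤ) * ((p : ℂ) - 2) * GaussQ p F - (p : ℂ) ^ (-2 : ℤ) * ((p : ℂ) - 1) * (GaussQ p F) ^ 2) ∧
    (c₁ ≠ 0 ∧ c₂ ≠ 0 →
      (((univ.filter (fun ab : F × F =>
      Trq p F (ab.1 ^ 2) = c₁ ∧ Trq p F (ab.2 ^ 2) = c₂)).card : ℕ) : ℂ) = ((p : ℂ) ^ ((m : ℤ) - 1 : ℤ) - (p : ℂ)⁻¹ * GaussQ p F) ^ 2) := by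
  obtain rfl := finrank_eq_of_card_eq_pow hq
  simpa only [Trq, GaussQ_eq_quadraticGaussSum, ZMod.card] using!
    N2_card_m_even_general (F := F) (ringChar_ne_two_of_odd hp) hmeven stdAddChar_ne_one c₁ c₂
end
end

section
/- Let c₁, c₂, c₃ ∈ 𝔽_p and set Ψ₄ = Σ_{a,b ∈ 𝔽_q} Σ_{x ∈ 𝔽_p^*} ζ_p^{x·Tr(a²) − x c₁} Σ_{y ∈ 𝔽_p^*} ζ_p^{y·Tr(b²) − y c₂} Σ_{z ∈ 𝔽_p^*} ζ_p^{z·Tr(ab) − z c₃}. If m is odd, then: Ψ₄ = −p^{−1}(p−1)²G²Ḡ² if c₁ = c₂ = c₃ = 0; Ψ₄ = p^{−1}(p−1)G²Ḡ² if c₁ = c₂ = 0 and c₃ ≠ 0; Ψ₄ = (η̄(−c₂)p^m + p^{−1}GḠ)(p−1)GḠ if c₂ ≠ 0 and c₁ = c₃ = 0; Ψ₄ = −(η̄(−c₂)p^m + p^{−1}GḠ)GḠ if c₁ = 0, c₂ ≠ 0, c₃ ≠ 0; Ψ₄ = (η̄(−c₁)p^m + p^{−1}GḠ)(p−1)GḠ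 if c₁ ≠ 0 and c₂ = c₃ = 0; Ψ₄ = −(η̄(−c₁)p^m + p^{−1}GḠ)GḠ if c₁ ≠ 0, c₂ = 0, c₃ ≠ 0; Ψ₄ = −(η̄(−c₁)+η̄(−c₂))p^m GḠ − (η̄(c₁c₂)+p^{−1})G²Ḡ² if c₁ ≠ 0, c₂ ≠ 0 and c₃ = 0; Ψ₄ = η̄(−c₁)(p−2)p^m GḠ + (p−2−p^{−1})G²Ḡ² if all c_i ≠ 0 and c₃² − c₁c₂ = 0; and Ψ₄ = −(η̄(−c₁)+η̄(−c₂))p^m GḠ − (η̄(c₁c₂)+1+p^{−1})G²Ḡ² if all c_i ≠ 0 and c₃² − c₁c₂ ≠ 0. -/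
open Finset
open scoped Classical

noncomputable section

/-! For `x ≠ 0` and `z = 2xt`, completing the square gives
`x a² + y b² + z ab = x (a + t b)² + (y - x t²) b²`, so the sum over `a, b` is a product of two
one-variable quadratic Gauss sums. Because `[𝔽_q : 𝔽_p]` is odd, `η` restricts to `η̄` on `𝔽_p`,
and the sums over `y` and `x` become quadratic Gauss sums over `𝔽_p`. What remains is the sum over
`t ≠ 0` of `η̄` at the quadratic polynomial `-(c₂ t² + 2 c₃ t + c₁)`, for which only the vanishing
of the discriminant matters; this is where the condition on `c₃² - c₁ c₂` comes from. -/

theorem isSquare_pow_iff_of_odd {G : Type*} [CommGroupWithZero G] {n : ℕ} (hn : Odd n) {x : G} :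
    IsSquare (x ^ n) ↔ IsSquare x := by
  refine ⟨?_, fun h => h.pow n⟩
  rintro ⟨y, hy⟩
  obtain ⟨k, rfl⟩ := hn
  rcases eq_or_ne x 0 with rfl | hx
  · exact IsSquare.zero
  · refine ⟨y / x ^ k, ?_⟩
    rw [div_mul_div_comm, ← hy, ← pow_add, ← two_mul, pow_succ',
      mul_div_cancel_right₀ x (pow_ne_zero _ hx)]

theorem isSquare_algebraMap_iff_of_odd_finrank {K L : Type*} [Field K] [Ring L] [Algebra K L]
    (h : Odd (Module.finrank K L)) {x : K} : IsSquare (algebraMap K L x) ↔ IsSquare x := by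
  refine ⟨fun hx => ?_, fun hx => hx.map (algebraMap K L)⟩
  rw [← isSquare_pow_iff_of_odd h, ← Algebra.norm_algebraMap (S := L)]
  exact hx.map (Algebra.norm K)

theorem card_cast_ne_zero_of_isPrimitive {K R : Type*} [Field K] [Fintype K] [CommRing R]
    [IsDomain R] {ψ : AddChar K R} (hψ : ψ.IsPrimitive) : (Fintype.card K : R) ≠ 0 := by
  intro hcard
  obtain ⟨p, _⟩ := CharP.exists K
  obtain ⟨n, hp, hn⟩ := FiniteField.card K p
  have : Fact p.Prime := ⟨hp⟩
  have hpR : (p : R) = 0 := by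
    rw [hn, Nat.cast_pow] at hcard
    exact pow_eq_zero_iff n.ne_zero |>.mp hcard
  have : CharP R p := (CharP.charP_iff_prime_eq_zero hp).mpr hpR
  refine hψ one_ne_zero (AddChar.ext _ _ fun x => frobenius_inj R p ?_)
  rw [AddChar.mulShift_apply, one_mul, frobenius_def, ← AddChar.map_nsmul_eq_pow, nsmul_eq_mul,
    CharP.cast_eq_zero, zero_mul, AddChar.map_zero_eq_one, AddChar.one_apply, map_one]

section NonzeroSums

theorem sum_erase_zero_mul_left {K M : Type*} [GroupWithZero K] [Fintype K] [DecidableEq K]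
    [AddCommMonoid M] {u : K} (hu : u ≠ 0) (f : K → M) :
    ∑ t ∈ univ.erase 0, f (u * t) = ∑ z ∈ univ.erase 0, f z :=
  sum_equiv (Equiv.mulLeft₀ u hu) (by simp [hu]) fun _ _ => rfl

variable {K R : Type*} [Field K] [Fintype K] [DecidableEq K]

/-- The analogue for the finite field `K` of Ramanujan's sum `c_p`: the value at `c` of
`∑ x ≠ 0, ψ (x * c)`, which is the same for all primitive additive characters `ψ` of `K`. -/
def ramanujanSum (R : Type*) [Ring R] (c : K) : R :=
  if c = 0 then (Fintype.card K : R) - 1 else -1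

theorem ramanujanSum_zero [Ring R] : ramanujanSum R (0 : K) = (Fintype.card K : R) - 1 :=
  if_pos rfl

theorem ramanujanSum_of_ne_zero [Ring R] {c : K} (hc : c ≠ 0) : ramanujanSum R c = -1 :=
  if_neg hc

theorem ramanujanSum_mul_left [Ring R] {u : K} (hu : u ≠ 0) (c : K) :
    ramanujanSum R (u * c) = ramanujanSum R c := by
  simp only [ramanujanSum, mul_eq_zero, hu, false_or]

theorem ramanujanSum_neg [Ring R] (c : K) : ramanujanSum R (-c) = ramanujanSum R c := by
  simp only [ramanujanSum, neg_eq_zero]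

theorem sum_erase_zero_addChar_mul_s8 [CommRing R] [IsDomain R] {ψ : AddChar K R}
    (hψ : ψ.IsPrimitive) (c : K) : ∑ x ∈ univ.erase 0, ψ (x * c) = ramanujanSum R c := by
  rw [sum_erase_eq_sub (mem_univ 0), AddChar.sum_mulShift c hψ, zero_mul, AddChar.map_zero_eq_one,
    ramanujanSum]
  split_ifs <;> simp

end NonzeroSums

section QuadChar

variable {K L R : Type*} [Field K] [Fintype K] [DecidableEq K] [Field L] [Fintype L]
  [DecidableEq L] [Algebra K L] [CommRing R]

/-- The quadratic character of `K` with values in `R`; Mathlib's `quadraticChar` is `ℤ`-valued,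
whereas `gaussSum` needs a character with the same target as `ψ`. -/
def quadChar (K R : Type*) [Field K] [Fintype K] [DecidableEq K] [CommRing R] : MulChar K R :=
  (quadraticChar K).ringHomComp (Int.castRingHom R)

theorem quadChar_apply (x : K) : quadChar K R x = (quadraticChar K x : R) := rfl

theorem quadChar_eq_ite (x : K) :
    quadChar K R x = if x = 0 then 0 else if IsSquare x then 1 else -1 := by
  rw [quadChar_apply, quadraticChar_apply, quadraticCharFun]
  split_ifs <;> simp

theorem quadChar_mul_self {x : K} (hx : x ≠ 0) : quadChar K R x * quadChar K R x = 1 := by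
  rw [quadChar_apply, ← Int.cast_mul, ← sq, quadraticChar_sq_one hx, Int.cast_one]

theorem quadChar_sq {x : K} (hx : x ≠ 0) : quadChar K R (x ^ 2) = 1 := by
  rw [sq, map_mul, quadChar_mul_self hx]

theorem quadChar_eq_of_mul_eq_sq {x y z : K} (hz : z ≠ 0) (h : x * y = z ^ 2) :
    quadChar K R x = quadChar K R y := by
  have hy : y ≠ 0 := by
    rintro rfl
    exact hz (sq_eq_zero_iff.mp (h.symm.trans (mul_zero x)))
  calc quadChar K R x
      = quadChar K R (x * y) * quadChar K R y := by
        rw [map_mul, mul_assoc, quadChar_mul_self hy, mul_one]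
    _ = quadChar K R y := by rw [h, quadChar_sq hz, one_mul]

theorem sum_quadChar (hK : ringChar K ≠ 2) : ∑ x, quadChar K R x = 0 := by
  simp only [quadChar_apply, ← Int.cast_sum, quadraticChar_sum_zero hK, Int.cast_zero]

theorem quadChar_algebraMap (h : Odd (Module.finrank K L)) (x : K) :
    quadChar L R (algebraMap K L x) = quadChar K R x := by
  simp only [quadChar_eq_ite, map_eq_zero, isSquare_algebraMap_iff_of_odd_finrank h]

theorem sum_comp_sq (hK : ringChar K ≠ 2) (f : K → R) :
    ∑ a, f (a ^ 2) = ∑ u, (quadChar K R u + 1) * f u := by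
  have card_fiber (u : K) : (#{a : K | a ^ 2 = u} : R) = quadChar K R u + 1 := by
    have := congrArg (Int.cast : ℤ → R) (quadraticChar_card_sqrts hK u)
    simpa [quadChar_apply] using this
  rw [← sum_fiberwise' univ (· ^ 2) f]
  exact sum_congr rfl fun u _ => by rw [sum_const, nsmul_eq_mul, card_fiber]

theorem sum_erase_zero_quadChar_linear (hK : ringChar K ≠ 2) (b c : K) :
    ∑ t ∈ univ.erase 0, quadChar K R (b * t + c) = quadChar K R c * ramanujanSum R b := by
  rw [sum_erase_eq_sub (mem_univ 0), mul_zero, zero_add]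
  rcases eq_or_ne b 0 with rfl | hb
  · simp only [zero_mul, zero_add, sum_const, card_univ, nsmul_eq_mul, ramanujanSum_zero]
    ring
  · have sum_eq_zero : ∑ t, quadChar K R (b * t + c) = 0 := by
      rw [← sum_quadChar hK]
      exact ((Equiv.mulLeft₀ b hb).trans (Equiv.addRight c)).sum_comp (quadChar K R)
    rw [sum_eq_zero, ramanujanSum_of_ne_zero hb]
    ring

theorem sum_quadChar_sq_sub (hK : ringChar K ≠ 2) (d : K) :
    ∑ t, quadChar K R (t ^ 2 - d) = ramanujanSum R d := by
  have shifted_sum : ∑ u, quadChar K R (u - d) = 0 :=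
    ((Equiv.subRight d).sum_comp (quadChar K R)).trans (sum_quadChar hK)
  calc ∑ t, quadChar K R (t ^ 2 - d)
      = ∑ u, quadChar K R u * quadChar K R (u - d) := by
        rw [sum_comp_sq hK fun u => quadChar K R (u - d)]
        simp only [add_mul, one_mul, sum_add_distrib, shifted_sum, add_zero]
    _ = ∑ u, quadChar K R u⁻¹ * quadChar K R (u⁻¹ - d) :=
        (Equiv.sum_comp (Equiv.inv K) fun u => quadChar K R u * quadChar K R (u - d)).symm
    _ = ∑ u ∈ univ.erase 0, quadChar K R u⁻¹ * quadChar K R (u⁻¹ - d) :=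
        (sum_erase univ (by rw [inv_zero, MulChar.map_zero, zero_mul])).symm
    _ = ∑ u ∈ univ.erase 0, quadChar K R (-d * u + 1) := by
        refine sum_congr rfl fun u hu => ?_
        have hu : u ≠ 0 := ne_of_mem_erase hu
        have factor : u⁻¹ - d = u⁻¹ * (-d * u + 1) := by field_simp; ring
        rw [factor, map_mul, ← mul_assoc, quadChar_mul_self (inv_ne_zero hu), one_mul]
    _ = ramanujanSum R d := by
        rw [sum_erase_zero_quadChar_linear hK, map_one, one_mul, ramanujanSum_neg]

theorem sum_quadChar_quadratic (hK : ringChar K ≠ 2) {a : K} (ha : a ≠ 0) (b c : K) :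
    ∑ t, quadChar K R (a * t ^ 2 + 2 * b * t + c)
      = quadChar K R a * ramanujanSum R (b ^ 2 - a * c) := by
  have complete_square (t : K) :
      a * t ^ 2 + 2 * b * t + c = a * ((t + b / a) ^ 2 - (a ^ 2)⁻¹ * (b ^ 2 - a * c)) := by
    field_simp
    ring
  simp only [complete_square, map_mul (quadChar K R) a, ← mul_sum]
  rw [← ramanujanSum_mul_left (inv_ne_zero (pow_ne_zero 2 ha)), ← sum_quadChar_sq_sub hK]
  congr 1
  exact Equiv.sum_comp (Equiv.addRight (b / a)) fun t =>
    quadChar K R (t ^ 2 - (a ^ 2)⁻¹ * (b ^ 2 - a * c))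

theorem sum_erase_zero_quadChar_quadratic (hK : ringChar K ≠ 2) {a : K} (ha : a ≠ 0) (b c : K) :
    ∑ t ∈ univ.erase 0, quadChar K R (a * t ^ 2 + 2 * b * t + c)
      = quadChar K R a * ramanujanSum R (b ^ 2 - a * c) - quadChar K R c := by
  rw [sum_erase_eq_sub (mem_univ 0), sum_quadChar_quadratic hK ha]
  congr 2
  ring

end QuadChar

section GaussSum

variable {K R : Type*} [Field K] [Fintype K] [DecidableEq K] [CommRing R]

/-- The quadratic Gauss sum of the additive character `ψ`. -/
def quadGaussSum (ψ : AddChar K R) : R := gaussSum (quadChar K R) ψ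

theorem sum_quadChar_mul_addChar (hK : ringChar K ≠ 2) (ψ : AddChar K R) (w : K) :
    ∑ u, quadChar K R u * ψ (u * w) = quadChar K R w * quadGaussSum ψ := by
  rcases eq_or_ne w 0 with rfl | hw
  · simp [sum_quadChar hK, MulChar.map_zero]
  · rw [quadGaussSum, ← gaussSum_mulShift (quadChar K R) ψ (Units.mk0 w hw), ← mul_assoc,
      Units.val_mk0, quadChar_mul_self hw, one_mul, gaussSum]
    simp only [AddChar.mulShift_apply, mul_comm w]

theorem sum_erase_zero_quadChar_mul_addChar (hK : ringChar K ≠ 2) (ψ : AddChar K R) (w : K) :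
    ∑ u ∈ univ.erase 0, quadChar K R u * ψ (u * w) = quadChar K R w * quadGaussSum ψ := by
  rw [sum_erase univ (by rw [MulChar.map_zero, zero_mul]), sum_quadChar_mul_addChar hK]

theorem sum_addChar_mul_quadChar_sub (hK : ringChar K ≠ 2) (ψ : AddChar K R) (c s : K) :
    ∑ y, ψ (y * c) * quadChar K R (y - s) = ψ (s * c) * (quadChar K R c * quadGaussSum ψ) := by
  calc ∑ y, ψ (y * c) * quadChar K R (y - s)
      = ∑ u, ψ ((u + s) * c) * quadChar K R (u + s - s) :=
        (Equiv.sum_comp (Equiv.addRight s) fun y => ψ (y * c) * quadChar K R (y - s)).symm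
    _ = ψ (s * c) * ∑ u, quadChar K R u * ψ (u * c) := by
        rw [mul_sum]
        refine sum_congr rfl fun u _ => ?_
        rw [add_sub_cancel_right, add_mul, AddChar.map_add_eq_mul]
        ring
    _ = ψ (s * c) * (quadChar K R c * quadGaussSum ψ) := by rw [sum_quadChar_mul_addChar hK]

theorem sum_erase_zero_addChar_mul_quadChar_sub (hK : ringChar K ≠ 2) (ψ : AddChar K R) {s : K}
    (hs : s ≠ 0) (c : K) (A B : R) :
    ∑ y ∈ univ.erase 0, ψ (y * c) * (quadChar K R (y - s) * A + if y = s then B else 0)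
      = ψ (s * c) * (quadChar K R c * quadGaussSum ψ * A + B) - quadChar K R (-s) * A := by
  rw [sum_erase_eq_sub (mem_univ 0), if_neg hs.symm, zero_mul, zero_sub, AddChar.map_zero_eq_one]
  simp only [mul_add, ← mul_assoc, sum_add_distrib, ← sum_mul, mul_ite, mul_zero, sum_ite_eq',
    mem_univ, if_true, sum_addChar_mul_quadChar_sub hK]
  ring

variable [IsDomain R] {ψ : AddChar K R}

/-- Unlike `gaussSum_sq`, this includes targets of characteristic two, where the quadratic
character is trivial. -/
theorem quadGaussSum_sq (hK : ringChar K ≠ 2) (hψ : ψ.IsPrimitive) :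
    quadGaussSum ψ ^ 2 = quadChar K R (-1) * Fintype.card K := by
  calc quadGaussSum ψ ^ 2
      = ∑ w, quadChar K R w * quadGaussSum ψ * ψ w := by
        rw [sq]
        nth_rw 1 [quadGaussSum, gaussSum, sum_mul]
        exact sum_congr rfl fun w _ => mul_right_comm _ _ _
    _ = ∑ w, ∑ u, quadChar K R u * ψ (w * (u + 1)) := by
        refine sum_congr rfl fun w _ => ?_
        rw [← sum_quadChar_mul_addChar hK, sum_mul]
        refine sum_congr rfl fun u _ => ?_
        rw [mul_assoc, ← AddChar.map_add_eq_mul, mul_comm u, mul_add_one]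
    _ = ∑ u, quadChar K R u * if u = -1 then (Fintype.card K : R) else 0 := by
        rw [sum_comm]
        refine sum_congr rfl fun u _ => ?_
        rw [← mul_sum, AddChar.sum_mulShift _ hψ]
        simp only [add_eq_zero_iff_eq_neg, Nat.cast_ite, Nat.cast_zero]
    _ = quadChar K R (-1) * Fintype.card K := by simp

theorem sum_addChar_mul_sq (hK : ringChar K ≠ 2) (hψ : ψ.IsPrimitive) (w : K) :
    ∑ a, ψ (w * a ^ 2)
      = quadChar K R w * quadGaussSum ψ + if w = 0 then (Fintype.card K : R) else 0 := by
  rw [sum_comp_sq hK fun u => ψ (w * u)]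
  simp only [add_mul, one_mul, sum_add_distrib, mul_comm w]
  rw [sum_quadChar_mul_addChar hK, AddChar.sum_mulShift w hψ, Nat.cast_ite, Nat.cast_zero]

theorem sum_addChar_binary_form (hK : ringChar K ≠ 2) (hψ : ψ.IsPrimitive) {x : K} (hx : x ≠ 0)
    (y t : K) :
    ∑ a, ∑ b, ψ (x * a ^ 2 + y * b ^ 2 + 2 * x * t * (a * b))
      = quadChar K R x * quadGaussSum ψ * (quadChar K R (y - x * t ^ 2) * quadGaussSum ψ +
          if y = x * t ^ 2 then (Fintype.card K : R) else 0) := by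
  have complete_square (a b : K) : x * a ^ 2 + y * b ^ 2 + 2 * x * t * (a * b)
      = x * (a + t * b) ^ 2 + (y - x * t ^ 2) * b ^ 2 := by ring
  have inner_sum (b : K) :
      ∑ a, ψ (x * (a + t * b) ^ 2) = quadChar K R x * quadGaussSum ψ := by
    calc ∑ a, ψ (x * (a + t * b) ^ 2)
        = ∑ a, ψ (x * a ^ 2) := Equiv.sum_comp (Equiv.addRight (t * b)) fun a => ψ (x * a ^ 2)
      _ = quadChar K R x * quadGaussSum ψ := by
        rw [sum_addChar_mul_sq hK hψ, if_neg hx, add_zero]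
  rw [sum_comm]
  simp only [complete_square, AddChar.map_add_eq_mul, ← sum_mul, inner_sum, ← mul_sum]
  simp only [sum_addChar_mul_sq hK hψ, sub_eq_zero]

end GaussSum

section Trace

variable {K L R : Type*} [Field K] [Field L] [Algebra K L] [CommRing R]

/-- The lift of an additive character of `K` to `L` along the trace; for `K = 𝔽_p` it takes the
canonical additive character of `𝔽_p` to that of `𝔽_q`. -/
def traceAddChar (L : Type*) [Field L] [Algebra K L] (ψ : AddChar K R) : AddChar L R :=
  ψ.compAddMonoidHom (Algebra.trace K L).toAddMonoidHom

theorem traceAddChar_apply (ψ : AddChar K R) (a : L) :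
    traceAddChar L ψ a = ψ (Algebra.trace K L a) := rfl

theorem traceAddChar_isPrimitive [FiniteDimensional K L] [Algebra.IsSeparable K L]
    {ψ : AddChar K R} (hψ : ψ ≠ 1) : (traceAddChar L ψ).IsPrimitive := by
  refine AddChar.IsPrimitive.of_ne_one fun h => ?_
  obtain ⟨x, hx⟩ := AddChar.ne_one_iff.mp hψ
  obtain ⟨a, rfl⟩ := Algebra.trace_surjective K L x
  exact hx (AddChar.eq_one_iff.mp h a)

variable [Fintype K] [DecidableEq K] [Fintype L]

/-- The exponential sum `Ψ₄`, for a finite extension `L / K` and an additive character `ψ` of `K`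
in place of `𝔽_q / 𝔽_p` and `ζ_p ^ ·`. -/
def psi4 (L : Type*) [Field L] [Fintype L] [Algebra K L] (ψ : AddChar K R) (c₁ c₂ c₃ : K) : R :=
  ∑ a : L, ∑ b : L,
    (∑ x ∈ univ.erase 0, ψ (x * Algebra.trace K L (a ^ 2) - x * c₁)) *
    (∑ y ∈ univ.erase 0, ψ (y * Algebra.trace K L (b ^ 2) - y * c₂)) *
    (∑ z ∈ univ.erase 0, ψ (z * Algebra.trace K L (a * b) - z * c₃))

theorem psi4_comm (ψ : AddChar K R) (c₁ c₂ c₃ : K) : psi4 L ψ c₁ c₂ c₃ = psi4 L ψ c₂ c₁ c₃ := by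
  rw [psi4, sum_comm]
  refine sum_congr rfl fun b _ => sum_congr rfl fun a _ => ?_
  rw [mul_comm a b, mul_comm (∑ x ∈ univ.erase 0, _)]

theorem psi4_eq_sum_quadratic_form (ψ : AddChar K R) (c₁ c₂ c₃ : K) :
    psi4 L ψ c₁ c₂ c₃ = ∑ x ∈ univ.erase 0, ∑ y ∈ univ.erase 0, ∑ z ∈ univ.erase 0,
      ψ (x * -c₁) * ψ (y * -c₂) * ψ (z * -c₃) *
        ∑ a : L, ∑ b : L, traceAddChar L ψ (x • a ^ 2 + y • b ^ 2 + z • (a * b)) := by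
  have separate (x y z : K) (a b : L) :
      ψ (x * -c₁) * ψ (y * -c₂) * ψ (z * -c₃) *
          traceAddChar L ψ (x • a ^ 2 + y • b ^ 2 + z • (a * b))
        = ψ (x * Algebra.trace K L (a ^ 2) - x * c₁) *
          ψ (y * Algebra.trace K L (b ^ 2) - y * c₂) *
          ψ (z * Algebra.trace K L (a * b) - z * c₃) := by
    simp only [traceAddChar_apply, map_add, map_smul, smul_eq_mul, ← AddChar.map_add_eq_mul]
    congr 1
    ring
  simp only [psi4, mul_sum univ, separate,
    sum_comm (s := univ.erase (0 : K)) (t := (univ : Finset L)), ← mul_sum, ← sum_mul]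

variable [DecidableEq L] [IsDomain R] {ψ : AddChar K R}

theorem sum_traceAddChar_binary_form (hK : ringChar K ≠ 2) (hψ : ψ.IsPrimitive)
    (hodd : Odd (Module.finrank K L)) {x : K} (hx : x ≠ 0) (y t : K) :
    ∑ a : L, ∑ b : L, traceAddChar L ψ (x • a ^ 2 + y • b ^ 2 + (2 * x * t) • (a * b))
      = quadChar K R x * quadGaussSum (traceAddChar L ψ) *
        (quadChar K R (y - x * t ^ 2) * quadGaussSum (traceAddChar L ψ) +
          if y = x * t ^ 2 then (Fintype.card L : R) else 0) := by
  have hL : ringChar L ≠ 2 := Algebra.ringChar_eq K L ▸ hK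
  have hΨ : (traceAddChar L ψ).IsPrimitive := 
    traceAddChar_isPrimitive (AddChar.mulShift_one ψ ▸ hψ one_ne_zero)
  have hx' : algebraMap K L x ≠ 0 := (map_ne_zero _).mpr hx
  have key := sum_addChar_binary_form hL hΨ hx' (algebraMap K L y) (algebraMap K L t)
  simpa only [← map_mul, ← map_pow, ← map_sub, ← map_ofNat (algebraMap K L), ← Algebra.smul_def,
    quadChar_algebraMap hodd, (algebraMap K L).injective.eq_iff] using key

theorem sum_erase_zero_sum_binary_form (hK : ringChar K ≠ 2) (hψ : ψ.IsPrimitive)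
    (hodd : Odd (Module.finrank K L)) (c₁ c₂ c₃ : K) {x t : K} (hx : x ≠ 0) (ht : t ≠ 0) :
    ∑ y ∈ univ.erase 0, ψ (x * -c₁) * ψ (y * -c₂) * ψ (2 * x * t * -c₃) *
        ∑ a : L, ∑ b : L, traceAddChar L ψ (x • a ^ 2 + y • b ^ 2 + (2 * x * t) • (a * b))
      = quadGaussSum (traceAddChar L ψ) *
          (quadChar K R (-c₂) * quadGaussSum ψ * quadGaussSum (traceAddChar L ψ) +
            Fintype.card L) *
          (quadChar K R x * ψ (x * (-c₂ * t ^ 2 + 2 * -c₃ * t + -c₁))) -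
        quadChar K R (-1) * quadGaussSum (traceAddChar L ψ) ^ 2 *
          (ψ (x * -c₁) * ψ (2 * x * t * -c₃)) := by
  have hs : x * t ^ 2 ≠ 0 := mul_ne_zero hx (pow_ne_zero 2 ht)
  have quadChar_leading : quadChar K R x * quadChar K R (-(x * t ^ 2)) = quadChar K R (-1) := by
    rw [show -(x * t ^ 2) = -1 * x * (t * t) by ring, map_mul, map_mul, map_mul,
      quadChar_mul_self ht, mul_one, mul_left_comm, quadChar_mul_self hx, mul_one]
  have addChar_combine : ψ (x * (-c₂ * t ^ 2 + 2 * -c₃ * t + -c₁))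
      = ψ (x * -c₁) * ψ (2 * x * t * -c₃) * ψ (x * t ^ 2 * -c₂) := by
    simp only [← AddChar.map_add_eq_mul]
    congr 1
    ring
  set G := quadGaussSum (traceAddChar L ψ)
  have sum_y := sum_erase_zero_addChar_mul_quadChar_sub hK ψ hs (-c₂) G (Fintype.card L : R)
  simp only [sum_traceAddChar_binary_form hK hψ hodd hx]
  calc _ = ψ (x * -c₁) * ψ (2 * x * t * -c₃) * quadChar K R x * G *
        ∑ y ∈ univ.erase 0, ψ (y * -c₂) * (quadChar K R (y - x * t ^ 2) * G +
          if y = x * t ^ 2 then (Fintype.card L : R) else 0) := by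
        rw [mul_sum]
        exact sum_congr rfl fun y _ => by ring
    _ = _ := by
        rw [sum_y, addChar_combine, ← quadChar_leading]
        ring

theorem psi4_eq (hK : ringChar K ≠ 2) (hψ : ψ.IsPrimitive) (hodd : Odd (Module.finrank K L))
    (c₁ c₂ c₃ : K) :
    psi4 L ψ c₁ c₂ c₃
      = quadGaussSum (traceAddChar L ψ) * quadGaussSum ψ *
          (quadChar K R (-c₂) * quadGaussSum ψ * quadGaussSum (traceAddChar L ψ) +
            Fintype.card L) *
          ∑ t ∈ univ.erase 0, quadChar K R (-c₂ * t ^ 2 + 2 * -c₃ * t + -c₁) -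
        quadChar K R (-1) * quadGaussSum (traceAddChar L ψ) ^ 2 *
          (ramanujanSum R c₁ * ramanujanSum R c₃) := by
  have two_mul_ne {x : K} (hx : x ∈ univ.erase 0) : 2 * x ≠ 0 :=
    mul_ne_zero (Ring.two_ne_zero hK) (ne_of_mem_erase hx)
  have main_sum : ∑ x ∈ univ.erase 0, ∑ t ∈ univ.erase 0,
      quadChar K R x * ψ (x * (-c₂ * t ^ 2 + 2 * -c₃ * t + -c₁))
        = (∑ t ∈ univ.erase 0, quadChar K R (-c₂ * t ^ 2 + 2 * -c₃ * t + -c₁)) *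
          quadGaussSum ψ := by
    rw [sum_comm, sum_mul]
    exact sum_congr rfl fun t _ => sum_erase_zero_quadChar_mul_addChar hK ψ _
  have degenerate_sum : ∑ x ∈ univ.erase 0, ∑ t ∈ univ.erase 0,
      ψ (x * -c₁) * ψ (2 * x * t * -c₃) = ramanujanSum R c₁ * ramanujanSum R c₃ := by
    rw [← ramanujanSum_neg c₁, ← ramanujanSum_neg c₃, ← sum_erase_zero_addChar_mul_s8 hψ, sum_mul]
    refine sum_congr rfl fun x hx => ?_
    rw [← mul_sum, sum_erase_zero_mul_left (two_mul_ne hx) fun z => ψ (z * -c₃),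
      sum_erase_zero_addChar_mul_s8 hψ]
  rw [psi4_eq_sum_quadratic_form]
  calc _ = ∑ x ∈ univ.erase 0, ∑ t ∈ univ.erase 0, ∑ y ∈ univ.erase 0,
        ψ (x * -c₁) * ψ (y * -c₂) * ψ (2 * x * t * -c₃) *
          ∑ a : L, ∑ b : L, traceAddChar L ψ (x • a ^ 2 + y • b ^ 2 + (2 * x * t) • (a * b)) := by
        refine sum_congr rfl fun x hx => ?_
        rw [sum_comm]
        exact (sum_erase_zero_mul_left (two_mul_ne hx) _).symm
    _ = _ := by
        rw [sum_congr rfl fun x hx => sum_congr rfl fun t ht => sum_erase_zero_sum_binary_form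
          hK hψ hodd c₁ c₂ c₃ (ne_of_mem_erase hx) (ne_of_mem_erase ht)]
        simp only [sum_sub_distrib, ← mul_sum _ _ (_ * _), main_sum, degenerate_sum]
        ring

end Trace

section Evaluation

variable {K L R : Type*} [Field K] [Fintype K] [DecidableEq K] [Field L] [Fintype L]
  [DecidableEq L] [Algebra K L] [Field R] {ψ : AddChar K R}

theorem quadChar_neg_one_eq (hK : ringChar K ≠ 2) (hψ : ψ.IsPrimitive) :
    quadChar K R (-1) = (Fintype.card K : R)⁻¹ * quadGaussSum ψ ^ 2 := by
  rw [eq_inv_mul_iff_mul_eq₀ (card_cast_ne_zero_of_isPrimitive hψ), quadGaussSum_sq hK hψ, mul_comm]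

theorem psi4_right_zero (hK : ringChar K ≠ 2) (hψ : ψ.IsPrimitive)
    (hodd : Odd (Module.finrank K L)) (c₁ c₃ : K) :
    psi4 L ψ c₁ 0 c₃
      = (quadChar K R (-c₁) * Fintype.card L - (Fintype.card K : R)⁻¹ *
          quadGaussSum (traceAddChar L ψ) * quadGaussSum ψ * ramanujanSum R c₁) *
        ramanujanSum R c₃ * (quadGaussSum (traceAddChar L ψ) * quadGaussSum ψ) := by
  have linear_sum : ∑ t ∈ univ.erase 0, quadChar K R (-0 * t ^ 2 + 2 * -c₃ * t + -c₁)
      = quadChar K R (-c₁) * ramanujanSum R c₃ := by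
    simp only [neg_zero, zero_mul, zero_add]
    rw [sum_erase_zero_quadChar_linear hK, ramanujanSum_mul_left (Ring.two_ne_zero hK),
      ramanujanSum_neg]
  rw [psi4_eq hK hψ hodd, linear_sum, neg_zero, MulChar.map_zero, quadChar_neg_one_eq hK hψ]
  ring

theorem psi4_left_zero (hK : ringChar K ≠ 2) (hψ : ψ.IsPrimitive)
    (hodd : Odd (Module.finrank K L)) (c₂ c₃ : K) :
    psi4 L ψ 0 c₂ c₃
      = (quadChar K R (-c₂) * Fintype.card L - (Fintype.card K : R)⁻¹ *
          quadGaussSum (traceAddChar L ψ) * quadGaussSum ψ * ramanujanSum R c₂) *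
        ramanujanSum R c₃ * (quadGaussSum (traceAddChar L ψ) * quadGaussSum ψ) := by
  rw [psi4_comm, psi4_right_zero hK hψ hodd]

theorem psi4_of_ne_zero (hK : ringChar K ≠ 2) (hψ : ψ.IsPrimitive)
    (hodd : Odd (Module.finrank K L)) (c₁ c₃ : K) {c₂ : K} (hc₁ : c₁ ≠ 0) (hc₂ : c₂ ≠ 0) :
    psi4 L ψ c₁ c₂ c₃
      = (quadChar K R (-c₂) * ramanujanSum R (c₃ ^ 2 - c₁ * c₂) - quadChar K R (-c₁)) *
          Fintype.card L * (quadGaussSum (traceAddChar L ψ) * quadGaussSum ψ) +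
        (ramanujanSum R (c₃ ^ 2 - c₁ * c₂) - quadChar K R (c₁ * c₂) +
          (Fintype.card K : R)⁻¹ * ramanujanSum R c₃) *
          quadGaussSum (traceAddChar L ψ) ^ 2 * quadGaussSum ψ ^ 2 := by
  have discriminant : (-c₃) ^ 2 - -c₂ * -c₁ = c₃ ^ 2 - c₁ * c₂ := by ring
  have quadChar_neg_sq : quadChar K R (-c₂) * quadChar K R (-c₂) = 1 :=
    quadChar_mul_self (neg_ne_zero.mpr hc₂)
  have quadChar_mul_neg : quadChar K R (-c₁) * quadChar K R (-c₂) = quadChar K R (c₁ * c₂) := by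
    rw [← map_mul, neg_mul_neg]
  rw [psi4_eq hK hψ hodd, sum_erase_zero_quadChar_quadratic hK (neg_ne_zero.mpr hc₂), discriminant,
    ramanujanSum_of_ne_zero hc₁, quadChar_neg_one_eq hK hψ]
  linear_combination quadGaussSum (traceAddChar L ψ) ^ 2 * quadGaussSum ψ ^ 2 *
    (ramanujanSum R (c₃ ^ 2 - c₁ * c₂) * quadChar_neg_sq - quadChar_mul_neg)

theorem Psi4_eval_m_odd_general (hK : ringChar K ≠ 2) (hψ : ψ.IsPrimitive)
    (hodd : Odd (Module.finrank K L)) {G g : R} (hG : G = quadGaussSum (traceAddChar L ψ))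
    (hg : g = quadGaussSum ψ) (c₁ c₂ c₃ : K) :
    (c₁ = 0 ∧ c₂ = 0 ∧ c₃ = 0 → psi4 L ψ c₁ c₂ c₃
      = -((Fintype.card K : R)⁻¹ * ((Fintype.card K : R) - 1) ^ 2 * G ^ 2 * g ^ 2)) ∧
    (c₁ = 0 ∧ c₂ = 0 ∧ c₃ ≠ 0 → psi4 L ψ c₁ c₂ c₃
      = (Fintype.card K : R)⁻¹ * ((Fintype.card K : R) - 1) * G ^ 2 * g ^ 2) ∧
    (c₂ ≠ 0 ∧ c₁ = 0 ∧ c₃ = 0 → psi4 L ψ c₁ c₂ c₃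
      = (quadChar K R (-c₂) * Fintype.card L + (Fintype.card K : R)⁻¹ * G * g) *
        ((Fintype.card K : R) - 1) * (G * g)) ∧
    (c₁ = 0 ∧ c₂ ≠ 0 ∧ c₃ ≠ 0 → psi4 L ψ c₁ c₂ c₃
      = -((quadChar K R (-c₂) * Fintype.card L + (Fintype.card K : R)⁻¹ * G * g) * (G * g))) ∧
    (c₁ ≠ 0 ∧ c₂ = 0 ∧ c₃ = 0 → psi4 L ψ c₁ c₂ c₃
      = (quadChar K R (-c₁) * Fintype.card L + (Fintype.card K : R)⁻¹ * G * g) *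
        ((Fintype.card K : R) - 1) * (G * g)) ∧
    (c₁ ≠ 0 ∧ c₂ = 0 ∧ c₃ ≠ 0 → psi4 L ψ c₁ c₂ c₃
      = -((quadChar K R (-c₁) * Fintype.card L + (Fintype.card K : R)⁻¹ * G * g) * (G * g))) ∧
    (c₁ ≠ 0 ∧ c₂ ≠ 0 ∧ c₃ = 0 → psi4 L ψ c₁ c₂ c₃
      = -((quadChar K R (-c₁) + quadChar K R (-c₂)) * Fintype.card L * (G * g)) -
        (quadChar K R (c₁ * c₂) + (Fintype.card K : R)⁻¹) * G ^ 2 * g ^ 2) ∧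
    ((c₁ ≠ 0 ∧ c₂ ≠ 0 ∧ c₃ ≠ 0) ∧ c₃ ^ 2 - c₁ * c₂ = 0 → psi4 L ψ c₁ c₂ c₃
      = quadChar K R (-c₁) * ((Fintype.card K : R) - 2) * Fintype.card L * (G * g) +
        ((Fintype.card K : R) - 2 - (Fintype.card K : R)⁻¹) * G ^ 2 * g ^ 2) ∧
    ((c₁ ≠ 0 ∧ c₂ ≠ 0 ∧ c₃ ≠ 0) ∧ c₃ ^ 2 - c₁ * c₂ ≠ 0 → psi4 L ψ c₁ c₂ c₃
      = -((quadChar K R (-c₁) + quadChar K R (-c₂)) * Fintype.card L * (G * g)) -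
        (quadChar K R (c₁ * c₂) + 1 + (Fintype.card K : R)⁻¹) * G ^ 2 * g ^ 2) := by
  have right_zero := psi4_right_zero hK hψ hodd
  have left_zero := psi4_left_zero hK hψ hodd
  have of_ne_zero := psi4_of_ne_zero hK hψ hodd
  simp only [← hG, ← hg] at right_zero left_zero of_ne_zero
  refine ⟨?_, ?_, ?_, ?_, ?_, ?_, ?_, ?_, ?_⟩
  · rintro ⟨rfl, rfl, rfl⟩
    rw [right_zero, neg_zero, MulChar.map_zero, ramanujanSum_zero]
    ring
  · rintro ⟨rfl, rfl, hc₃⟩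
    rw [right_zero, neg_zero, MulChar.map_zero, ramanujanSum_zero, ramanujanSum_of_ne_zero hc₃]
    ring
  · rintro ⟨hc₂, rfl, rfl⟩
    rw [left_zero, ramanujanSum_zero, ramanujanSum_of_ne_zero hc₂]
    ring
  · rintro ⟨rfl, hc₂, hc₃⟩
    rw [left_zero, ramanujanSum_of_ne_zero hc₂, ramanujanSum_of_ne_zero hc₃]
    ring
  · rintro ⟨hc₁, rfl, rfl⟩
    rw [right_zero, ramanujanSum_zero, ramanujanSum_of_ne_zero hc₁]
    ring
  · rintro ⟨hc₁, rfl, hc₃⟩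
    rw [right_zero, ramanujanSum_of_ne_zero hc₁, ramanujanSum_of_ne_zero hc₃]
    ring
  · rintro ⟨hc₁, hc₂, rfl⟩
    have hD : (0 : K) ^ 2 - c₁ * c₂ ≠ 0 := by simp [hc₁, hc₂]
    rw [of_ne_zero c₁ 0 hc₁ hc₂, ramanujanSum_of_ne_zero hD, ramanujanSum_zero]
    linear_combination G ^ 2 * g ^ 2 * inv_mul_cancel₀ (card_cast_ne_zero_of_isPrimitive hψ)
  · rintro ⟨⟨hc₁, hc₂, hc₃⟩, hD⟩
    have c₁_mul_c₂ : c₁ * c₂ = c₃ ^ 2 := (sub_eq_zero.mp hD).symm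
    have quadChar_neg : quadChar K R (-c₁) = quadChar K R (-c₂) :=
      quadChar_eq_of_mul_eq_sq hc₃ ((neg_mul_neg c₁ c₂).trans c₁_mul_c₂)
    rw [of_ne_zero c₁ c₃ hc₁ hc₂, hD, ramanujanSum_zero, ramanujanSum_of_ne_zero hc₃, c₁_mul_c₂,
      quadChar_sq hc₃, quadChar_neg]
    ring
  · rintro ⟨⟨hc₁, hc₂, hc₃⟩, hD⟩
    rw [of_ne_zero c₁ c₃ hc₁ hc₂, ramanujanSum_of_ne_zero hD, ramanujanSum_of_ne_zero hc₃]
    ring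

end Evaluation

section PrimeField

variable {p : ℕ}

theorem ringChar_zmod_ne_two_of_odd (hp : Odd p) : ringChar (ZMod p) ≠ 2 := by
  rw [ZMod.ringChar_zmod_n]
  rintro rfl
  exact absurd hp (by decide)

variable [Fact p.Prime]

theorem chiBar_eq (c : ZMod p) : chiBar p c = ZMod.stdAddChar c := by
  have h := ZMod.stdAddChar_coe (N := p) (c.val : ℤ)
  rw [Int.cast_natCast, ZMod.natCast_zmod_val] at h
  rw [h, chiBar, zeta, ← Complex.exp_nat_mul]
  congr 1
  push_cast
  ring

theorem etaBar_eq (c : ZMod p) : etaBar p c = quadChar (ZMod p) ℂ c := by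
  rw [etaBar, quadChar_eq_ite]
  congr

theorem GaussP_eq : GaussP p = quadGaussSum (ZMod.stdAddChar (N := p)) := by
  simp only [GaussP, filter_ne', etaBar_eq, chiBar_eq]
  exact sum_erase univ (by rw [MulChar.map_zero, zero_mul])

variable {F : Type} [Field F] [Fintype F] [Algebra (ZMod p) F]

theorem etaQ_eq (x : F) : etaQ F x = quadChar F ℂ x := by
  rw [etaQ, quadChar_eq_ite]
  congr

theorem GaussQ_eq : GaussQ p F = quadGaussSum (traceAddChar F (ZMod.stdAddChar (N := p))) := by
  simp only [GaussQ, filter_ne', etaQ_eq, chiQ, Trq, chiBar_eq, ← traceAddChar_apply]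
  exact sum_erase univ (by rw [MulChar.map_zero, zero_mul])

theorem sum_chiBar_eq_psi4 (c₁ c₂ c₃ : ZMod p) :
    (∑ a : F, ∑ b : F,
      (∑ x ∈ univ.filter (fun x : ZMod p => x ≠ 0), chiBar p (x * Trq p F (a ^ 2) - x * c₁)) *
      (∑ y ∈ univ.filter (fun y : ZMod p => y ≠ 0), chiBar p (y * Trq p F (b ^ 2) - y * c₂)) *
      (∑ z ∈ univ.filter (fun z : ZMod p => z ≠ 0), chiBar p (z * Trq p F (a * b) - z * c₃)))
      = psi4 F ZMod.stdAddChar c₁ c₂ c₃ := by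
  simp only [psi4, filter_ne', chiBar_eq, Trq]

theorem odd_finrank_of_card_eq_pow {m : ℕ} (hm : Odd m) (hq : Fintype.card F = p ^ m) :
    Odd (Module.finrank (ZMod p) F) := by
  have hcard := Module.card_eq_pow_finrank (K := ZMod p) (V := F)
  rw [hq, ZMod.card] at hcard
  rwa [← Nat.pow_right_injective (Fact.out : p.Prime).two_le hcard]

end PrimeField

theorem Psi4_eval_m_odd (p m : ℕ) [Fact (Nat.Prime p)] (hp : Odd p)
    (F : Type) [Field F] [Fintype F] [Algebra (ZMod p) F]
    (hm : 0 < m) (hq : Fintype.card F = p ^ m)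
    (hmodd : Odd m) (c₁ c₂ c₃ : ZMod p) :
    (c₁ = 0 ∧ c₂ = 0 ∧ c₃ = 0 →
      (∑ a : F, ∑ b : F,
      (∑ x ∈ univ.filter (fun x : ZMod p => x ≠ 0), chiBar p (x * Trq p F (a ^ 2) - x * c₁)) *
      (∑ y ∈ univ.filter (fun y : ZMod p => y ≠ 0), chiBar p (y * Trq p F (b ^ 2) - y * c₂)) *
      (∑ z ∈ univ.filter (fun z : ZMod p => z ≠ 0), chiBar p (z * Trq p F (a * b) - z * c₃))) = -((p : ℂ)⁻¹ * ((p : ℂ) - 1) ^ 2 * (GaussQ p F) ^ 2 * (GaussP p) ^ 2)) ∧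
    (c₁ = 0 ∧ c₂ = 0 ∧ c₃ ≠ 0 →
      (∑ a : F, ∑ b : F,
      (∑ x ∈ univ.filter (fun x : ZMod p => x ≠ 0), chiBar p (x * Trq p F (a ^ 2) - x * c₁)) *
      (∑ y ∈ univ.filter (fun y : ZMod p => y ≠ 0), chiBar p (y * Trq p F (b ^ 2) - y * c₂)) *
      (∑ z ∈ univ.filter (fun z : ZMod p => z ≠ 0), chiBar p (z * Trq p F (a * b) - z * c₃))) = (p : ℂ)⁻¹ * ((p : ℂ) - 1) * (GaussQ p F) ^ 2 * (GaussP p) ^ 2) ∧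
    (c₂ ≠ 0 ∧ c₁ = 0 ∧ c₃ = 0 →
      (∑ a : F, ∑ b : F,
      (∑ x ∈ univ.filter (fun x : ZMod p => x ≠ 0), chiBar p (x * Trq p F (a ^ 2) - x * c₁)) *
      (∑ y ∈ univ.filter (fun y : ZMod p => y ≠ 0), chiBar p (y * Trq p F (b ^ 2) - y * c₂)) *
      (∑ z ∈ univ.filter (fun z : ZMod p => z ≠ 0), chiBar p (z * Trq p F (a * b) - z * c₃))) = (etaBar p (-c₂) * (p : ℂ) ^ m + (p : ℂ)⁻¹ * GaussQ p F * GaussP p) * ((p : ℂ) - 1) * (GaussQ p F * GaussP p)) ∧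
    (c₁ = 0 ∧ c₂ ≠ 0 ∧ c₃ ≠ 0 →
      (∑ a : F, ∑ b : F,
      (∑ x ∈ univ.filter (fun x : ZMod p => x ≠ 0), chiBar p (x * Trq p F (a ^ 2) - x * c₁)) *
      (∑ y ∈ univ.filter (fun y : ZMod p => y ≠ 0), chiBar p (y * Trq p F (b ^ 2) - y * c₂)) *
      (∑ z ∈ univ.filter (fun z : ZMod p => z ≠ 0), chiBar p (z * Trq p F (a * b) - z * c₃))) = -((etaBar p (-c₂) * (p : ℂ) ^ m + (p : ℂ)⁻¹ * GaussQ p F * GaussP p) * (GaussQ p F * GaussP p))) ∧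
    (c₁ ≠ 0 ∧ c₂ = 0 ∧ c₃ = 0 →
      (∑ a : F, ∑ b : F,
      (∑ x ∈ univ.filter (fun x : ZMod p => x ≠ 0), chiBar p (x * Trq p F (a ^ 2) - x * c₁)) *
      (∑ y ∈ univ.filter (fun y : ZMod p => y ≠ 0), chiBar p (y * Trq p F (b ^ 2) - y * c₂)) *
      (∑ z ∈ univ.filter (fun z : ZMod p => z ≠ 0), chiBar p (z * Trq p F (a * b) - z * c₃))) = (etaBar p (-c₁) * (p : ℂ) ^ m + (p : ℂ)⁻¹ * GaussQ p F * GaussP p) * ((p : ℂ) - 1) * (GaussQ p F * GaussP p)) ∧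
    (c₁ ≠ 0 ∧ c₂ = 0 ∧ c₃ ≠ 0 →
      (∑ a : F, ∑ b : F,
      (∑ x ∈ univ.filter (fun x : ZMod p => x ≠ 0), chiBar p (x * Trq p F (a ^ 2) - x * c₁)) *
      (∑ y ∈ univ.filter (fun y : ZMod p => y ≠ 0), chiBar p (y * Trq p F (b ^ 2) - y * c₂)) *
      (∑ z ∈ univ.filter (fun z : ZMod p => z ≠ 0), chiBar p (z * Trq p F (a * b) - z * c₃))) = -((etaBar p (-c₁) * (p : ℂ) ^ m + (p : ℂ)⁻¹ * GaussQ p F * GaussP p) * (GaussQ p F * GaussP p))) ∧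
    (c₁ ≠ 0 ∧ c₂ ≠ 0 ∧ c₃ = 0 →
      (∑ a : F, ∑ b : F,
      (∑ x ∈ univ.filter (fun x : ZMod p => x ≠ 0), chiBar p (x * Trq p F (a ^ 2) - x * c₁)) *
      (∑ y ∈ univ.filter (fun y : ZMod p => y ≠ 0), chiBar p (y * Trq p F (b ^ 2) - y * c₂)) *
      (∑ z ∈ univ.filter (fun z : ZMod p => z ≠ 0), chiBar p (z * Trq p F (a * b) - z * c₃))) = -((etaBar p (-c₁) + etaBar p (-c₂)) * (p : ℂ) ^ m * (GaussQ p F * GaussP p)) - (etaBar p (c₁ * c₂) + (p : ℂ)⁻¹) * (GaussQ p F) ^ 2 * (GaussP p) ^ 2) ∧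
    ((c₁ ≠ 0 ∧ c₂ ≠ 0 ∧ c₃ ≠ 0) ∧ c₃ ^ 2 - c₁ * c₂ = 0 →
      (∑ a : F, ∑ b : F,
      (∑ x ∈ univ.filter (fun x : ZMod p => x ≠ 0), chiBar p (x * Trq p F (a ^ 2) - x * c₁)) *
      (∑ y ∈ univ.filter (fun y : ZMod p => y ≠ 0), chiBar p (y * Trq p F (b ^ 2) - y * c₂)) *
      (∑ z ∈ univ.filter (fun z : ZMod p => z ≠ 0), chiBar p (z * Trq p F (a * b) - z * c₃))) = etaBar p (-c₁) * ((p : ℂ) - 2) * (p : ℂ) ^ m * (GaussQ p F * GaussP p) + ((p : ℂ) - 2 - (p : ℂ)⁻¹) * (GaussQ p F) ^ 2 * (GaussP p) ^ 2) ∧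
    ((c₁ ≠ 0 ∧ c₂ ≠ 0 ∧ c₃ ≠ 0) ∧ c₃ ^ 2 - c₁ * c₂ ≠ 0 →
      (∑ a : F, ∑ b : F,
      (∑ x ∈ univ.filter (fun x : ZMod p => x ≠ 0), chiBar p (x * Trq p F (a ^ 2) - x * c₁)) *
      (∑ y ∈ univ.filter (fun y : ZMod p => y ≠ 0), chiBar p (y * Trq p F (b ^ 2) - y * c₂)) *
      (∑ z ∈ univ.filter (fun z : ZMod p => z ≠ 0), chiBar p (z * Trq p F (a * b) - z * c₃))) = -((etaBar p (-c₁) + etaBar p (-c₂)) * (p : ℂ) ^ m * (GaussQ p F * GaussP p)) - (etaBar p (c₁ * c₂) + 1 + (p : ℂ)⁻¹) * (GaussQ p F) ^ 2 * (GaussP p) ^ 2) := by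
  simpa only [sum_chiBar_eq_psi4, etaBar_eq, ZMod.card, hq, Nat.cast_pow] using
    Psi4_eval_m_odd_general (ringChar_zmod_ne_two_of_odd hp) (ZMod.isPrimitive_stdAddChar p)
      (odd_finrank_of_card_eq_pow hmodd hq) GaussQ_eq GaussP_eq c₁ c₂ c₃
end
end
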